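/- Let α, β ∈ (0,1), M > 0. Given an i.i.d. sample of size 2n (n ≥ 2) from density f on ℝ^d, split it into (A₁,…,Aₙ) and (Y₁,…,Yₙ); let Āₙ = (1/n)Σ A_i, vₙ = Āₙ/‖Āₙ‖, and Z_i = ⟨Y_i, vₙ⟩ for 1 ≤ i ≤ n, with order statistics Z_(1) ≤ … ≤ Z_(n). Let K_n = {2^j : 0 ≤ j ≤ ⌊log₂(n/2)⌋}, for u ∈ (0,1) let q_{u,k} be the (1−u)-quantile of the (n−k+1)-th order statistic of n i.i.d. standard Gaussian variables, and α_n = sup{u ∈ (0,1) : P₀(∃k ∈ K_n, Z_(n−k+1) > q_{u,k}) ≤ α} computed for i.i.d. standard Gaussians. Define Ψ₂ = sup_{k∈K_n} 1{Z_(n−k+1) > q_{α_n,k}}. Then Ψ₂ is of level α, and there exists a positive constant C(α,β,M) depending only on α, β, M such that P_f(Ψ₂ = 0) ≤ β for every f = f(ε,μ) ∈ F₂[M] satisfying ε‖μ‖ ≥ C(α,β,M)·d^{1/4}·√(ln ln n)/√n and n·ε ≥ C(α,β,M). -/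

import Mathlib

open MeasureTheory Real
open scoped RealInnerProductSpace

noncomputable section

/-- Density of the standard Gaussian distribution `N_d(0_d, I_d)` on `ℝ^d`. -/
def gaussDensity (d : ℕ) (x : EuclideanSpace ℝ (Fin d)) : ℝ :=
  (2 * π) ^ (-(d : ℝ) / 2) * Real.exp (-‖x‖ ^ 2 / 2)

/-- The standard Gaussian measure on `ℝ^d`. -/
def gaussMeasure (d : ℕ) : Measure (EuclideanSpace ℝ (Fin d)) :=
  volume.withDensity fun x => ENNReal.ofReal (gaussDensity d x)

/-- The two-component Gaussian mixture measure with parameters `(ε, μ)`. -/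
def mixMeasure (d : ℕ) (ε : ℝ) (μ : EuclideanSpace ℝ (Fin d)) :
    Measure (EuclideanSpace ℝ (Fin d)) :=
  volume.withDensity fun x =>
    ENNReal.ofReal ((1 - ε) * gaussDensity d x + ε * gaussDensity d (x - μ))

open scoped Classical in
/-- The `k`-th order statistic `Z_(k)` of the sample `z` (1-indexed):
the smallest `t` such that at least `k` of the `zᵢ` are `≤ t`. -/
def orderStat {n : ℕ} (z : Fin n → ℝ) (k : ℕ) : ℝ :=
  sInf {t : ℝ | k ≤ (Finset.univ.filter fun i => z i ≤ t).card}

/-- The set `K_n = {2^j : 0 ≤ j ≤ ⌊log₂(n/2)⌋}`. -/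
def Kset (n : ℕ) : Finset ℕ := (Finset.range (Nat.log 2 (n / 2) + 1)).image (2 ^ ·)

/-- Law of an i.i.d. `n`-sample of standard Gaussian real random variables. -/
def nullPi (n : ℕ) : Measure (Fin n → ℝ) :=
  Measure.pi fun _ : Fin n => ProbabilityTheory.gaussianReal 0 1

/-- `q_{u,k}`, the `(1-u)`-quantile of the order statistic `Z_(n-k+1)` of an i.i.d.
`n`-sample of standard Gaussian variables. -/
def quant (n : ℕ) (u : ℝ) (k : ℕ) : ℝ :=
  sInf {t : ℝ | nullPi n {z | t < orderStat z (n - k + 1)} ≤ ENNReal.ofReal u}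

/-- The corrected level
`α_n = sup{u ∈ (0,1) : P₀(∃ k ∈ K_n, Z_(n-k+1) > q_{u,k}) ≤ α}`. -/
def alphaCorr (n : ℕ) (α : ℝ) : ℝ :=
  sSup {u : ℝ | u ∈ Set.Ioo (0 : ℝ) 1 ∧
    nullPi n {z | ∃ k ∈ Kset n, quant n u k < orderStat z (n - k + 1)} ≤ ENNReal.ofReal α}

/-- The empirical mean `Āₙ` of the first half of the sample. -/
def avg {d n : ℕ} (A : Fin n → EuclideanSpace ℝ (Fin d)) : EuclideanSpace ℝ (Fin d) :=
  (n : ℝ)⁻¹ • ∑ i, A i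

/-- Rejection region of the test `Ψ₂`: given the sample `(A, Y)`, project `Y` onto the
direction `vₙ = Āₙ/‖Āₙ‖` and reject if `Z_(n-k+1) > q_{α_n,k}` for some `k ∈ K_n`. -/
def rejRegion2 (d n : ℕ) (α : ℝ) :
    Set ((Fin n → EuclideanSpace ℝ (Fin d)) × (Fin n → EuclideanSpace ℝ (Fin d))) :=
  {p | ∃ k ∈ Kset n,
    quant n (alphaCorr n α) k <
      orderStat (fun i => ⟪p.2 i, ‖avg p.1‖⁻¹ • avg p.1⟫) (n - k + 1)}

/-- The law of the split sample `(A₁,…,Aₙ,Y₁,…,Yₙ)` of `2n` i.i.d. observations with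
common distribution `P`. -/
def splitLaw {d : ℕ} (n : ℕ) (P : Measure (EuclideanSpace ℝ (Fin d))) :
    Measure ((Fin n → EuclideanSpace ℝ (Fin d)) × (Fin n → EuclideanSpace ℝ (Fin d))) :=
  (Measure.pi fun _ : Fin n => P).prod (Measure.pi fun _ : Fin n => P)

section

open ProbabilityTheory Filter Topology

lemma gaussDensity_nonneg (d : ℕ) (x : EuclideanSpace ℝ (Fin d)) : 0 ≤ gaussDensity d x := by
  unfold gaussDensity; positivity

lemma continuous_gaussDensity (d : ℕ) : Continuous (gaussDensity d) := by
  unfold gaussDensity; fun_prop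

lemma integrable_gaussDensity (d : ℕ) : Integrable (gaussDensity d) := by
  have h := (GaussianFourier.integrable_cexp_neg_mul_sq_norm_add (b := 1 / 2)
    (V := EuclideanSpace ℝ (Fin d)) (by norm_num) 0 0).norm
  unfold gaussDensity
  refine (h.congr (ae_of_all _ fun x => ?_)).const_mul _
  simp only [Complex.norm_exp]
  congr 1
  norm_cast
  simp
  norm_cast
  ring

instance isFiniteMeasure_gaussMeasure (d : ℕ) : IsFiniteMeasure (gaussMeasure d) :=
  isFiniteMeasure_withDensity_ofReal (integrable_gaussDensity d).2

lemma gaussMeasure_eq_stdGaussian (d : ℕ) :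
    gaussMeasure d = stdGaussian (EuclideanSpace ℝ (Fin d)) := by
  refine Measure.ext_of_charFun (funext fun t => ?_)
  rw [charFun_stdGaussian, charFun_apply, gaussMeasure,
    integral_withDensity_eq_integral_toReal_smul
      (continuous_gaussDensity d).measurable.ennreal_ofReal (by simp)]
  have key := GaussianFourier.integral_cexp_neg_mul_sq_norm_add (b := 1 / 2)
    (V := EuclideanSpace ℝ (Fin d)) (by norm_num) Complex.I t
  have h1 : ∀ x : EuclideanSpace ℝ (Fin d),
      (ENNReal.ofReal (gaussDensity d x)).toReal • Complex.exp (⟪x, t⟫ * Complex.I) =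
      (((2 * π) ^ (-(d : ℝ) / 2) : ℝ) : ℂ) *
        Complex.exp (-(1 / 2) * ‖x‖ ^ 2 + Complex.I * ⟪t, x⟫) := by
    intro x
    rw [ENNReal.toReal_ofReal (gaussDensity_nonneg d x), gaussDensity, Complex.real_smul,
      Complex.ofReal_mul, mul_assoc, Complex.ofReal_exp, ← Complex.exp_add, real_inner_comm]
    congr 2
    push_cast
    ring
  simp_rw [h1]
  rw [integral_const_mul, key]
  have h2 : (((2 * π) ^ (-(d : ℝ) / 2) : ℝ) : ℂ) *
      (π / (1 / 2)) ^ (Module.finrank ℝ (EuclideanSpace ℝ (Fin d)) / 2 : ℂ) = 1 := by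
    have h2pi : (0 : ℝ) < 2 * π := by positivity
    have : ((π : ℂ) / (1 / 2)) ^ (Module.finrank ℝ (EuclideanSpace ℝ (Fin d)) / 2 : ℂ) =
        (((2 * π) ^ ((d : ℝ) / 2) : ℝ) : ℂ) := by
      rw [Complex.ofReal_cpow h2pi.le]
      simp
      ring_nf
    rw [this, ← Complex.ofReal_mul, ← Real.rpow_add h2pi]
    norm_num
    ring_nf
    simp
  rw [← mul_assoc, h2, one_mul]
  congr 1
  simp
  ring

instance isProbabilityMeasure_gaussMeasure (d : ℕ) : IsProbabilityMeasure (gaussMeasure d) := by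
  rw [gaussMeasure_eq_stdGaussian]; infer_instance

lemma gaussMeasure_map_inner (d : ℕ) (w : EuclideanSpace ℝ (Fin d)) :
    (gaussMeasure d).map (fun x => ⟪x, w⟫) = gaussianReal 0 (‖w‖₊ ^ 2) := by
  have h := IsGaussian.map_eq_gaussianReal (μ := stdGaussian (EuclideanSpace ℝ (Fin d)))
    (innerSL ℝ w)
  rw [integral_strongDual_stdGaussian, variance_dual_stdGaussian] at h
  rw [gaussMeasure_eq_stdGaussian]
  have e : (fun x => ⟪x, w⟫) = ⇑(innerSL ℝ w) := by
    ext x; simp [real_inner_comm]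
  rw [e, h]
  congr 1
  ext
  simp

lemma mixMeasure_eq (d : ℕ) (ε : ℝ) (hε : ε ∈ Set.Ioo (0 : ℝ) 1)
    (μ : EuclideanSpace ℝ (Fin d)) :
    mixMeasure d ε μ = ENNReal.ofReal (1 - ε) • gaussMeasure d +
      ENNReal.ofReal ε • (gaussMeasure d).map (fun x => x + μ) := by
  have hm := (continuous_gaussDensity d).measurable
  have hshift : (gaussMeasure d).map (fun x => x + μ) =
      volume.withDensity fun x => ENNReal.ofReal (gaussDensity d (x - μ)) := by
    ext s hs
    rw [Measure.map_apply (by fun_prop) hs, gaussMeasure,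
      withDensity_apply _ (hs.preimage (by fun_prop)), withDensity_apply _ hs,
      ← lintegral_indicator hs, ← lintegral_indicator (hs.preimage (by fun_prop)),
      ← lintegral_add_right_eq_self
        (s.indicator fun x => ENNReal.ofReal (gaussDensity d (x - μ))) μ]
    refine lintegral_congr fun x => ?_
    simp only [Set.indicator, add_sub_cancel_right]
    rfl
  rw [hshift, mixMeasure, gaussMeasure, ← withDensity_smul _ (by fun_prop),
    ← withDensity_smul _ (by fun_prop), ← withDensity_add_left (by fun_prop)]
  congr 1
  ext x
  simp only [Pi.add_apply, Pi.smul_apply, smul_eq_mul]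
  rw [← ENNReal.ofReal_mul (by linarith [hε.2]), ← ENNReal.ofReal_mul hε.1.le,
    ← ENNReal.ofReal_add (mul_nonneg (by linarith [hε.2]) (gaussDensity_nonneg d _))
      (mul_nonneg hε.1.le (gaussDensity_nonneg d _))]

lemma isProbabilityMeasure_mixMeasure (d : ℕ) (ε : ℝ) (hε : ε ∈ Set.Ioo (0 : ℝ) 1)
    (μ : EuclideanSpace ℝ (Fin d)) : IsProbabilityMeasure (mixMeasure d ε μ) := by
  constructor
  rw [mixMeasure_eq d ε hε μ]
  simp only [Measure.add_apply, Measure.smul_apply, measure_univ, smul_eq_mul, mul_one]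
  rw [Measure.map_apply (by fun_prop) .univ, Set.preimage_univ, measure_univ, mul_one,
    ← ENNReal.ofReal_add (by linarith [hε.2]) hε.1.le]
  simp

lemma mixMeasure_map_inner (d : ℕ) (ε : ℝ) (hε : ε ∈ Set.Ioo (0 : ℝ) 1)
    (μ w : EuclideanSpace ℝ (Fin d)) :
    (mixMeasure d ε μ).map (fun x => ⟪x, w⟫) =
      ENNReal.ofReal (1 - ε) • gaussianReal 0 (‖w‖₊ ^ 2) +
        ENNReal.ofReal ε • gaussianReal ⟪μ, w⟫ (‖w‖₊ ^ 2) := by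
  have hw : Measurable fun x : EuclideanSpace ℝ (Fin d) => ⟪x, w⟫ := by fun_prop
  have hcomp : (fun x : EuclideanSpace ℝ (Fin d) => ⟪x, w⟫) ∘ (fun x => x + μ) =
      (fun y => y + ⟪μ, w⟫) ∘ fun x => ⟪x, w⟫ := by
    ext x; simp [inner_add_left]
  rw [mixMeasure_eq d ε hε μ, Measure.map_add _ _ hw, Measure.map_smul, Measure.map_smul,
    gaussMeasure_map_inner, Measure.map_map hw (by fun_prop), hcomp,
    ← Measure.map_map (by fun_prop) hw, gaussMeasure_map_inner, gaussianReal_map_add_const,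
    zero_add]

open scoped Classical in
lemma orderStat_le_iff {n : ℕ} (z : Fin n → ℝ) {j : ℕ} (hj : 1 ≤ j) (hjn : j ≤ n) (t : ℝ) :
    orderStat z j ≤ t ↔ j ≤ (Finset.univ.filter fun i => z i ≤ t).card := by
  set S : Set ℝ := {t : ℝ | j ≤ (Finset.univ.filter fun i => z i ≤ t).card} with hS
  have hmono : ∀ a b, a ≤ b → a ∈ S → b ∈ S := fun a b hab ha =>
    le_trans ha (Finset.card_le_card fun i => by simpa using fun h => h.trans hab)
  have hbdd : BddBelow S := by
    obtain ⟨b, hb⟩ := (Set.finite_range z).bddBelow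
    refine ⟨b, fun t ht => ?_⟩
    obtain ⟨i, hi⟩ := Finset.card_pos.1 (lt_of_lt_of_le hj ht)
    exact (hb ⟨i, rfl⟩).trans (by simpa using hi)
  have hne : S.Nonempty := by
    obtain ⟨b, hb⟩ := (Set.finite_range z).bddAbove
    refine ⟨b, ?_⟩
    have : (Finset.univ.filter fun i => z i ≤ b) = Finset.univ :=
      Finset.filter_true_of_mem fun i _ => hb ⟨i, rfl⟩
    simpa [hS, this] using hjn
  have hclosed : IsClosed S := by
    have : S = ⋃ T ∈ {T : Finset (Fin n) | j ≤ T.card}, ⋂ i ∈ T, Set.Ici (z i) := by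
      ext t
      simp only [hS, Set.mem_ofPred_eq, Set.mem_iUnion, Set.mem_iInter, Set.mem_Ici, exists_prop]
      refine ⟨fun h => ⟨_, h, fun i hi => by simpa using hi⟩, fun ⟨T, hT, h⟩ =>
        hT.trans (Finset.card_le_card fun i hi => by simpa using h i hi)⟩
    rw [this]
    exact (Set.toFinite _).isClosed_biUnion fun T _ => isClosed_biInter fun i _ => isClosed_Ici
  exact ⟨fun h => hmono _ _ h (hclosed.csInf_mem hne hbdd), fun h => csInf_le hbdd h⟩

open scoped Classical in
lemma lt_orderStat_sub_iff {n k : ℕ} (z : Fin n → ℝ) (hk : 1 ≤ k) (hkn : k ≤ n) (t : ℝ) :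
    t < orderStat z (n - k + 1) ↔ k ≤ (Finset.univ.filter fun i => t < z i).card := by
  rw [← not_le, orderStat_le_iff z (by omega) (by omega)]
  have h := Finset.card_filter_add_card_filter_not (s := (Finset.univ : Finset (Fin n)))
    (fun i => z i ≤ t)
  simp only [not_le, Finset.card_univ, Fintype.card_fin] at h ⊢
  omega

lemma measurable_orderStat {n j : ℕ} (hj : 1 ≤ j) (hjn : j ≤ n) :
    Measurable fun z : Fin n → ℝ => orderStat z j := by
  classical
  refine measurable_of_Iic fun t => ?_
  have : (fun z : Fin n → ℝ => orderStat z j) ⁻¹' Set.Iic t =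
      ⋃ T ∈ {T : Finset (Fin n) | j ≤ T.card}, ⋂ i ∈ T, {z | z i ≤ t} := by
    ext z
    simp only [Set.mem_preimage, Set.mem_Iic, orderStat_le_iff z hj hjn, Set.mem_ofPred_eq,
      Set.mem_iUnion, Set.mem_iInter, exists_prop]
    refine ⟨fun h => ⟨_, h, fun i hi => by simpa using hi⟩, fun ⟨T, hT, h⟩ =>
      hT.trans (Finset.card_le_card fun i hi => by simpa using h i hi)⟩
  rw [this]
  exact .biUnion (Set.to_countable _) fun T _ => .biInter (Set.to_countable _) fun i _ =>
    measurableSet_le (measurable_pi_apply i) measurable_const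

lemma exists_orderStat_eq {n j : ℕ} (z : Fin n → ℝ) (hj : 1 ≤ j) (hjn : j ≤ n) :
    ∃ i, orderStat z j = z i := by
  classical
  have h := (orderStat_le_iff z hj hjn (orderStat z j)).1 le_rfl
  obtain ⟨i, hi, hmax⟩ := Finset.exists_max_image _ z
    (Finset.card_pos.1 (lt_of_lt_of_le hj h))
  refine ⟨i, le_antisymm ?_ (by simpa using hi)⟩
  rw [orderStat_le_iff z hj hjn]
  exact h.trans (Finset.card_le_card fun l hl => by simpa using hmax l hl)

section Quantile

variable (ν : Measure ℝ) [IsProbabilityMeasure ν]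

lemma measureReal_Ioi_eq : (fun t => ν.real (Set.Ioi t)) = fun t => 1 - cdf ν t := by
  ext t
  rw [cdf_eq_real, ← Set.compl_Iic, probReal_compl_eq_one_sub measurableSet_Iic]

lemma continuous_measureReal_Ioi (hν : ∀ x, ν {x} = 0) :
    Continuous fun t => ν.real (Set.Ioi t) := by
  rw [measureReal_Ioi_eq]
  refine continuous_const.sub (continuous_iff_continuousAt.2 fun x => ?_)
  rw [(cdf ν).mono.continuousAt_iff_leftLim_eq_rightLim, (cdf ν).rightLim_eq]
  have h := (cdf ν).measure_singleton x
  rw [measure_cdf, hν x, eq_comm, ENNReal.ofReal_eq_zero] at h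
  exact le_antisymm ((cdf ν).mono.leftLim_le le_rfl) (by linarith)

lemma tendsto_measureReal_Ioi_atTop : Tendsto (fun t => ν.real (Set.Ioi t)) atTop (𝓝 0) := by
  rw [measureReal_Ioi_eq]
  simpa using (tendsto_cdf_atTop ν).const_sub 1

lemma tendsto_measureReal_Ioi_atBot : Tendsto (fun t => ν.real (Set.Ioi t)) atBot (𝓝 1) := by
  rw [measureReal_Ioi_eq]
  simpa using (tendsto_cdf_atBot ν).const_sub 1

lemma bddBelow_measureReal_Ioi_le {u : ℝ} (hu : u < 1) :
    BddBelow {t | ν.real (Set.Ioi t) ≤ u} := by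
  obtain ⟨b, hb⟩ := ((tendsto_measureReal_Ioi_atBot ν).eventually (lt_mem_nhds hu)).exists
  exact ⟨b, fun t ht => le_of_not_gt fun htb => absurd
    ((measureReal_mono (Set.Ioi_subset_Ioi htb.le)).trans ht) (not_le.2 hb)⟩

lemma measureReal_Ioi_sInf (hν : ∀ x, ν {x} = 0) {u : ℝ} (hu0 : 0 < u) (hu1 : u < 1) :
    ν.real (Set.Ioi (sInf {t | ν.real (Set.Ioi t) ≤ u})) = u := by
  have hc := continuous_measureReal_Ioi ν hν
  have hne : {t | ν.real (Set.Ioi t) ≤ u}.Nonempty :=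
    ((tendsto_measureReal_Ioi_atTop ν).eventually (gt_mem_nhds hu0)).exists.imp fun _ h => h.le
  have hbdd := bddBelow_measureReal_Ioi_le ν hu1
  have hcl : IsClosed {t | ν.real (Set.Ioi t) ≤ u} := isClosed_le hc continuous_const
  refine le_antisymm (hcl.csInf_mem hne hbdd) ?_
  refine ge_of_tendsto (hc.continuousWithinAt (s := Set.Iio (sInf {t | ν.real (Set.Ioi t) ≤ u}))) ?_
  filter_upwards [self_mem_nhdsWithin] with t ht
  exact le_of_not_ge fun h => (not_le.2 ht) (csInf_le hbdd h)

end Quantile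

lemma one_le_of_mem_Kset {n k : ℕ} (hk : k ∈ Kset n) : 1 ≤ k := by
  simp only [Kset, Finset.mem_image] at hk
  obtain ⟨j, -, rfl⟩ := hk
  exact Nat.one_le_two_pow

lemma le_half_of_mem_Kset {n k : ℕ} (hn : 2 ≤ n) (hk : k ∈ Kset n) : k ≤ n / 2 := by
  simp only [Kset, Finset.mem_image, Finset.mem_range] at hk
  obtain ⟨j, hj, rfl⟩ := hk
  exact Nat.pow_le_of_le_log (by omega) (by omega)

lemma one_mem_Kset (n : ℕ) : 1 ∈ Kset n :=
  Finset.mem_image.2 ⟨0, by simp, by simp⟩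

lemma card_Kset (n : ℕ) : (Kset n).card = Nat.log 2 (n / 2) + 1 := by
  rw [Kset, Finset.card_image_of_injective _ (Nat.pow_right_injective le_rfl), Finset.card_range]

instance isProbabilityMeasure_nullPi (n : ℕ) : IsProbabilityMeasure (nullPi n) := by
  unfold nullPi; infer_instance

lemma gaussianReal_zero_one_singleton (x : ℝ) : gaussianReal 0 1 {x} = 0 := by
  have := nullSingletonClass_gaussianReal (μ := 0) (v := 1) one_ne_zero
  exact measure_singleton x

lemma nullPi_map_orderStat_singleton {n j : ℕ} (hj : 1 ≤ j) (hjn : j ≤ n) (x : ℝ) :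
    (nullPi n).map (fun z => orderStat z j) {x} = 0 := by
  rw [Measure.map_apply (measurable_orderStat hj hjn) (measurableSet_singleton x)]
  refine measure_mono_null (t := ⋃ i, {z | z i = x}) (fun z hz => ?_) (measure_iUnion_null fun i => ?_)
  · obtain ⟨i, hi⟩ := exists_orderStat_eq z hj hjn
    exact Set.mem_iUnion.2 ⟨i, hi.symm.trans hz⟩
  · have h := (measurePreserving_eval (fun _ : Fin n => gaussianReal 0 1) i).measure_preimage
      (measurableSet_singleton x).nullMeasurableSet
    exact h.trans (gaussianReal_zero_one_singleton x)

lemma quant_eq {n k : ℕ} (hk : 1 ≤ k) (hkn : k ≤ n) {u : ℝ} (hu : 0 ≤ u) :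
    quant n u k = sInf {t | ((nullPi n).map fun z => orderStat z (n - k + 1)).real (Set.Ioi t) ≤ u} := by
  have hm := measurable_orderStat (n := n) (j := n - k + 1) (by omega) (by omega)
  unfold quant
  congr 1
  ext t
  rw [Set.mem_ofPred_eq, Set.mem_ofPred_eq, map_measureReal_apply hm measurableSet_Ioi,
    ENNReal.le_ofReal_iff_toReal_le (measure_ne_top _ _) hu]
  rfl

lemma nullPi_quant_lt {n k : ℕ} (hk : 1 ≤ k) (hkn : k ≤ n) {u : ℝ} (hu0 : 0 < u) (hu1 : u < 1) :
    (nullPi n).real {z | quant n u k < orderStat z (n - k + 1)} = u := by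
  have hm := measurable_orderStat (n := n) (j := n - k + 1) (by omega) (by omega)
  have := Measure.isProbabilityMeasure_map (μ := nullPi n) hm.aemeasurable
  have h := measureReal_Ioi_sInf ((nullPi n).map fun z => orderStat z (n - k + 1))
    (nullPi_map_orderStat_singleton (by omega) (by omega)) hu0 hu1
  rw [← quant_eq hk hkn hu0.le, map_measureReal_apply hm measurableSet_Ioi] at h
  exact h

lemma quant_le {n k : ℕ} (hk : 1 ≤ k) (hkn : k ≤ n) {u t : ℝ} (hu0 : 0 ≤ u) (hu1 : u < 1)
    (ht : (nullPi n).real {z | t < orderStat z (n - k + 1)} ≤ u) : quant n u k ≤ t := by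
  have hm := measurable_orderStat (n := n) (j := n - k + 1) (by omega) (by omega)
  have := Measure.isProbabilityMeasure_map (μ := nullPi n) hm.aemeasurable
  rw [quant_eq hk hkn hu0]
  refine csInf_le (bddBelow_measureReal_Ioi_le _ hu1) ?_
  rw [Set.mem_ofPred_eq, map_measureReal_apply hm measurableSet_Ioi]
  exact ht

section Level

variable {n : ℕ} {α : ℝ}

lemma alphaCorr_mem_le (hn : 2 ≤ n) (hα : 0 < α) {u : ℝ} (hu : u ∈ Set.Ioo (0 : ℝ) 1)
    (h : nullPi n {z | ∃ k ∈ Kset n, quant n u k < orderStat z (n - k + 1)} ≤ ENNReal.ofReal α) :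
    u ≤ α := by
  rw [← nullPi_quant_lt (n := n) le_rfl (by omega) hu.1 hu.2]
  refine ENNReal.toReal_le_of_le_ofReal hα.le (le_trans (measure_mono fun z hz => ?_) h)
  exact ⟨1, one_mem_Kset n, hz⟩

lemma div_card_Kset_le_alphaCorr (hn : 2 ≤ n) (hα : α ∈ Set.Ioo (0 : ℝ) 1) :
    α / (Kset n).card ≤ alphaCorr n α := by
  have hc : (1 : ℝ) ≤ (Kset n).card := by
    exact_mod_cast Finset.card_pos.2 ⟨1, one_mem_Kset n⟩
  have hu : α / (Kset n).card ∈ Set.Ioo (0 : ℝ) 1 :=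
    ⟨div_pos hα.1 (by linarith), lt_of_le_of_lt (div_le_self hα.1.le hc) hα.2⟩
  refine le_csSup ⟨1, fun u hu => hu.1.2.le⟩ ⟨hu, ?_⟩
  rw [ENNReal.le_ofReal_iff_toReal_le (measure_ne_top _ _) hα.1.le]
  have hset : {z : Fin n → ℝ | ∃ k ∈ Kset n,
      quant n (α / (Kset n).card) k < orderStat z (n - k + 1)} =
      ⋃ k ∈ Kset n, {z | quant n (α / (Kset n).card) k < orderStat z (n - k + 1)} := by
    ext; simp
  change (nullPi n).real _ ≤ α
  rw [hset]
  refine (measureReal_biUnion_finset_le _ _).trans (le_of_eq ?_)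
  rw [Finset.sum_congr rfl fun k hk => nullPi_quant_lt (one_le_of_mem_Kset hk)
    ((le_half_of_mem_Kset hn hk).trans (Nat.div_le_self _ _)) hu.1 hu.2]
  simp only [Finset.sum_const, nsmul_eq_mul]
  field_simp

lemma alphaCorr_pos (hn : 2 ≤ n) (hα : α ∈ Set.Ioo (0 : ℝ) 1) : 0 < alphaCorr n α :=
  lt_of_lt_of_le (div_pos hα.1 (by exact_mod_cast Finset.card_pos.2 ⟨1, one_mem_Kset n⟩))
    (div_card_Kset_le_alphaCorr hn hα)

lemma alphaCorr_le (hn : 2 ≤ n) (hα : α ∈ Set.Ioo (0 : ℝ) 1) : alphaCorr n α ≤ α :=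
  Real.sSup_le (fun _ hu => alphaCorr_mem_le hn hα.1 hu.1 hu.2) hα.1.le

lemma nullPi_level (hn : 2 ≤ n) (hα : α ∈ Set.Ioo (0 : ℝ) 1) :
    nullPi n {z | ∃ k ∈ Kset n, quant n (alphaCorr n α) k < orderStat z (n - k + 1)} ≤
      ENNReal.ofReal α := by
  rw [ENNReal.le_ofReal_iff_toReal_le (measure_ne_top _ _) hα.1.le]
  change (nullPi n).real _ ≤ α
  have hpos := alphaCorr_pos hn hα
  have hlt := (alphaCorr_le hn hα).trans_lt hα.2
  have hc : (0 : ℝ) < (Kset n).card := by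
    exact_mod_cast Finset.card_pos.2 ⟨1, one_mem_Kset n⟩
  refine le_of_forall_pos_le_add fun δ hδ => ?_
  obtain ⟨u, ⟨hu, hule⟩, hu'⟩ := exists_lt_of_lt_csSup
    (Set.nonempty_iff_ne_empty.2 fun h => by
      rw [alphaCorr, h, Real.sSup_empty] at hpos
      exact lt_irrefl _ hpos)
    (show alphaCorr n α - δ / (Kset n).card < alphaCorr n α by
      linarith [div_pos hδ hc])
  have huα : u ≤ alphaCorr n α := le_csSup ⟨1, fun u hu => hu.1.2.le⟩ ⟨hu, hule⟩
  set E : ℝ → ℕ → Set (Fin n → ℝ) := fun u k => {z | quant n u k < orderStat z (n - k + 1)}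
  have hmE : ∀ v, ∀ k ∈ Kset n, MeasurableSet (E v k) := fun v k hk => by
    have h1 := one_le_of_mem_Kset hk
    have h2 := le_half_of_mem_Kset hn hk
    exact measurable_orderStat (by omega) (by omega) measurableSet_Ioi
  have hdiff : ∀ k ∈ Kset n, (nullPi n).real (E (alphaCorr n α) k \ E u k) ≤
      alphaCorr n α - u := by
    intro k hk
    have h1 := one_le_of_mem_Kset hk
    have h2 := le_half_of_mem_Kset hn hk
    rcases le_total (quant n (alphaCorr n α) k) (quant n u k) with hq | hq
    · have hsub : E u k ⊆ E (alphaCorr n α) k := fun z hz => lt_of_le_of_lt hq hz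
      rw [measureReal_sdiff hsub (hmE u k hk),
        nullPi_quant_lt h1 (by omega) hpos hlt, nullPi_quant_lt h1 (by omega) hu.1 hu.2]
    · have hsub : E (alphaCorr n α) k ⊆ E u k := fun z hz => lt_of_le_of_lt hq hz
      rw [Set.sdiff_eq_empty.2 hsub]
      simpa using huα
  calc (nullPi n).real {z | ∃ k ∈ Kset n, quant n (alphaCorr n α) k < orderStat z (n - k + 1)}
      ≤ (nullPi n).real ({z | ∃ k ∈ Kset n, quant n u k < orderStat z (n - k + 1)} ∪
          ⋃ k ∈ Kset n, (E (alphaCorr n α) k \ E u k)) := by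
        refine measureReal_mono ?_
        rintro z ⟨k, hk, hz⟩
        by_cases h : z ∈ E u k
        · exact Or.inl ⟨k, hk, h⟩
        · exact Or.inr (Set.mem_biUnion hk ⟨hz, h⟩)
    _ ≤ α + ∑ k ∈ Kset n, (alphaCorr n α - u) := by
        refine (measureReal_union_le _ _).trans (add_le_add
          (ENNReal.toReal_le_of_le_ofReal hα.1.le hule) ?_)
        exact (measureReal_biUnion_finset_le _ _).trans (Finset.sum_le_sum hdiff)
    _ ≤ α + δ := by
        have : alphaCorr n α - u < δ / (Kset n).card := by
          have : alphaCorr n α - δ / (Kset n).card < u := hu'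
          linarith
        rw [lt_div_iff₀ hc] at this
        simp only [Finset.sum_const, nsmul_eq_mul]
        linarith

end Level

lemma measurable_avg (d n : ℕ) : Measurable (avg : (Fin n → EuclideanSpace ℝ (Fin d)) → _) := by
  unfold avg; fun_prop

lemma measurableSet_rejRegion2 {d n : ℕ} (hn : 2 ≤ n) (α : ℝ) :
    MeasurableSet (rejRegion2 d n α) := by
  have : rejRegion2 d n α = ⋃ k ∈ Kset n, {p |
    quant n (alphaCorr n α) k <
      orderStat (fun i => ⟪p.2 i, ‖avg p.1‖⁻¹ • avg p.1⟫) (n - k + 1)} := by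
    ext; simp [rejRegion2]
  rw [this]
  refine Finset.measurableSet_biUnion _ fun k hk => ?_
  have h1 := one_le_of_mem_Kset hk
  have h2 := le_half_of_mem_Kset hn hk
  have hav : Measurable fun p : (Fin n → EuclideanSpace ℝ (Fin d)) ×
      (Fin n → EuclideanSpace ℝ (Fin d)) => avg p.1 := (measurable_avg d n).comp measurable_fst
  refine measurableSet_lt measurable_const
    ((measurable_orderStat (by omega) (by omega)).comp (measurable_pi_lambda _ fun i => ?_))
  fun_prop

lemma nullPi_sum_eq_zero {n : ℕ} (hn : 0 < n) : nullPi n {x | ∑ i, x i = 0} = 0 := by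
  have hw : (WithLp.toLp 2 fun _ : Fin n => (1 : ℝ)) ≠ 0 := by
    intro h
    simpa using congrArg (fun v => v ⟨0, hn⟩) h
  have h := gaussMeasure_map_inner n (WithLp.toLp 2 fun _ : Fin n => (1 : ℝ))
  have h0 : (gaussMeasure n) {x | ⟪x, WithLp.toLp 2 fun _ : Fin n => (1 : ℝ)⟫ = 0} = 0 := by
    have hv : ‖(WithLp.toLp 2 fun _ : Fin n => (1 : ℝ))‖₊ ^ 2 ≠ 0 := by
      simpa using hw
    have := nullSingletonClass_gaussianReal (μ := 0) hv
    have h1 := measure_singleton (μ := gaussianReal 0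
      (‖(WithLp.toLp 2 fun _ : Fin n => (1 : ℝ))‖₊ ^ 2)) 0
    rw [← h, Measure.map_apply (by fun_prop) (measurableSet_singleton _)] at h1
    exact h1
  rw [gaussMeasure_eq_stdGaussian, ← map_pi_eq_stdGaussian, Measure.map_apply (by fun_prop)
    (measurableSet_eq_fun (by fun_prop) (by fun_prop))] at h0
  rw [nullPi]
  convert h0 using 2
  ext x
  simp [PiLp.inner_apply]

lemma pi_gaussMeasure_map_inner {d n : ℕ} (v : EuclideanSpace ℝ (Fin d)) (hv : ‖v‖ = 1) :
    (Measure.pi fun _ : Fin n => gaussMeasure d).map (fun Y i => ⟪Y i, v⟫) = nullPi n := by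
  have hone : (‖v‖₊ ^ 2) = 1 := by
    ext; simp [hv]
  have h := gaussMeasure_map_inner d v
  rw [hone] at h
  have hs : SigmaFinite ((gaussMeasure d).map fun x => ⟪x, v⟫) := by rw [h]; infer_instance
  rw [Measure.pi_map_pi (f := fun _ x => ⟪x, v⟫) fun i => by fun_prop, h, nullPi]

lemma pi_gaussMeasure_avg_eq_zero {d n : ℕ} (hd : 1 ≤ d) (hn : 0 < n) :
    (Measure.pi fun _ : Fin n => gaussMeasure d) {A | avg A = 0} = 0 := by
  have hv : ‖EuclideanSpace.single (⟨0, hd⟩ : Fin d) (1 : ℝ)‖ = 1 := by simp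
  have h := nullPi_sum_eq_zero hn
  rw [← pi_gaussMeasure_map_inner _ hv, Measure.map_apply (by fun_prop)
    (measurableSet_eq_fun (by fun_prop) (by fun_prop))] at h
  refine measure_mono_null (fun A hA => ?_) h
  have hA' : ∑ i, A i = 0 := by
    have : (n : ℝ)⁻¹ • ∑ i, A i = 0 := hA
    simpa [hn.ne'] using this
  simp only [Set.mem_preimage, Set.mem_ofPred_eq, ← sum_inner, hA', inner_zero_left]

lemma splitLaw_gaussMeasure_rejRegion2_le {d n : ℕ} {α : ℝ} (hα : α ∈ Set.Ioo (0 : ℝ) 1)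
    (hd : 1 ≤ d) (hn : 2 ≤ n) :
    splitLaw n (gaussMeasure d) (rejRegion2 d n α) ≤ ENNReal.ofReal α := by
  have hmeas : MeasurableSet {z : Fin n → ℝ | ∃ k ∈ Kset n,
      quant n (alphaCorr n α) k < orderStat z (n - k + 1)} := by
    have : {z : Fin n → ℝ | ∃ k ∈ Kset n,
        quant n (alphaCorr n α) k < orderStat z (n - k + 1)} =
        ⋃ k ∈ Kset n, {z | quant n (alphaCorr n α) k < orderStat z (n - k + 1)} := by
      ext; simp
    rw [this]
    refine Finset.measurableSet_biUnion _ fun k hk => ?_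
    have h1 := one_le_of_mem_Kset hk
    have h2 := le_half_of_mem_Kset hn hk
    exact measurable_orderStat (by omega) (by omega) measurableSet_Ioi
  rw [splitLaw, Measure.prod_apply (measurableSet_rejRegion2 hn α)]
  calc _ ≤ ∫⁻ _, ENNReal.ofReal α ∂(Measure.pi fun _ : Fin n => gaussMeasure d) := by
        refine lintegral_mono_ae ?_
        have hne : ∀ᵐ A ∂(Measure.pi fun _ : Fin n => gaussMeasure d), avg A ≠ 0 :=
          measure_eq_zero_iff_ae_notMem.1 (pi_gaussMeasure_avg_eq_zero hd (by omega))
        filter_upwards [hne] with A hA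
        have h := nullPi_level hn hα
        rw [← pi_gaussMeasure_map_inner _ (norm_smul_inv_norm (𝕜 := ℝ) hA),
          Measure.map_apply (by fun_prop) hmeas] at h
        exact h
    _ = ENNReal.ofReal α := by simp

section ProductSample

variable {Ω : Type*} [MeasurableSpace Ω] (P : Measure Ω) [IsProbabilityMeasure P] (n : ℕ)

open scoped Classical in
/-- **Hoeffding's inequality** for the number of points of an i.i.d. sample in a set. -/
lemma pi_real_card_ge_le {B : Set Ω} (hB : MeasurableSet B) {s : ℝ} (hs : 0 ≤ s) (hn : 0 < n) :
    (Measure.pi fun _ : Fin n => P).real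
        {y | n * (P.real B + s) ≤ (Finset.univ.filter fun i => y i ∈ B).card} ≤
      exp (-2 * n * s ^ 2) := by
  set Q := Measure.pi fun _ : Fin n => P
  set X : Ω → ℝ := B.indicator 1 with hX
  have hXm : Measurable X := measurable_one.indicator hB
  have hmean : ∀ i : Fin n, ∫ y, X (y i) ∂Q = P.real B := fun i => by
    rw [← integral_indicator_one hB]
    exact integral_comp_eval (μ := fun _ : Fin n => P) hXm.aestronglyMeasurable
  have hsub : ∀ i ∈ (Finset.univ : Finset (Fin n)),
      HasSubgaussianMGF (fun y : Fin n → Ω => X (y i) - P.real B) ((‖(1 : ℝ) - 0‖₊ / 2) ^ 2) Q := by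
    intro i _
    have h := hasSubgaussianMGF_of_mem_Icc (μ := Q) (X := fun y : Fin n → Ω => X (y i))
      (a := 0) (b := 1) (hXm.comp (measurable_pi_apply i)).aemeasurable
      (ae_of_all _ fun y => by by_cases h : y i ∈ B <;> simp [hX, h])
    rwa [hmean i] at h
  have hind : iIndepFun (fun (i : Fin n) (y : Fin n → Ω) => X (y i) - P.real B) Q :=
    iIndepFun_pi (X := fun _ x => X x - P.real B) fun i => (hXm.sub_const _).aemeasurable
  have h := HasSubgaussianMGF.measure_sum_ge_le_of_iIndepFun hind hsub
    (ε := n * s) (by positivity)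
  refine (le_of_eq ?_).trans (h.trans (le_of_eq ?_))
  · congr 1
    ext y
    have hsum : ∑ i, X (y i) = ((Finset.univ.filter fun i => y i ∈ B).card : ℝ) := by
      simp [hX, Set.indicator_apply]
    simp only [Set.mem_ofPred_eq, Finset.sum_sub_distrib, hsum, Finset.sum_const, Finset.card_univ,
      Fintype.card_fin, nsmul_eq_mul]
    constructor <;> intro h <;> linarith
  · congr 1
    have : (n : ℝ) ≠ 0 := by positivity
    simp
    field_simp

variable {P} {X : Ω → ℝ}

lemma memLp_pi_mean (hX : MemLp X 2 P) :
    MemLp (fun A : Fin n → Ω => (n : ℝ)⁻¹ * ∑ i, X (A i)) 2 (Measure.pi fun _ : Fin n => P) :=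
  (memLp_finsetSum _ fun i _ => hX.comp_measurePreserving
    (measurePreserving_eval (fun _ : Fin n => P) i)).const_mul _

lemma integral_pi_mean (hX : MemLp X 2 P) (hn : 0 < n) :
    ∫ A, (n : ℝ)⁻¹ * ∑ i, X (A i) ∂(Measure.pi fun _ : Fin n => P) = ∫ x, X x ∂P := by
  have hi : Integrable X P := hX.integrable one_le_two
  have hmp := fun i : Fin n => measurePreserving_eval (fun _ : Fin n => P) i
  have hint : ∀ i : Fin n, Integrable (fun A : Fin n → Ω => X (A i))
      (Measure.pi fun _ : Fin n => P) := fun i => (hmp i).integrable_comp_of_integrable hi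
  rw [integral_const_mul, integral_finsetSum _ fun i _ => hint i]
  have : ∀ i : Fin n, ∫ A, X (A i) ∂(Measure.pi fun _ : Fin n => P) = ∫ x, X x ∂P := fun i =>
    integral_comp_eval (μ := fun _ : Fin n => P) hi.aestronglyMeasurable
  simp only [this, Finset.sum_const, Finset.card_univ, Fintype.card_fin, nsmul_eq_mul]
  have : (n : ℝ) ≠ 0 := by positivity
  field_simp

lemma variance_pi_mean (hX : MemLp X 2 P) (hn : 0 < n) :
    Var[fun A : Fin n → Ω => (n : ℝ)⁻¹ * ∑ i, X (A i); Measure.pi fun _ : Fin n => P] =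
      Var[X; P] / n := by
  rw [variance_const_mul]
  have h := variance_sum_pi (μ := fun _ : Fin n => P) (X := fun _ => X) fun _ => hX
  have e : (∑ i : Fin n, fun ω : Fin n → Ω => X (ω i)) = fun A => ∑ i, X (A i) := by
    ext A; simp
  rw [e] at h
  rw [h]
  have : (n : ℝ) ≠ 0 := by positivity
  simp
  field_simp

end ProductSample

lemma integral_sq_gaussianReal (m : ℝ) (v : NNReal) :
    ∫ x, x ^ 2 ∂(gaussianReal m v) = m ^ 2 + v := by
  have h := variance_eq_sub (memLp_id_gaussianReal (μ := m) (v := v) 2)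
  rw [variance_id_gaussianReal] at h
  simp only [id, Pi.pow_apply, integral_id_gaussianReal] at h
  linarith

section Mixture

variable {d : ℕ} {ε : ℝ}

lemma memLp_inner_mixMeasure (hε : ε ∈ Set.Ioo (0 : ℝ) 1) (μ w : EuclideanSpace ℝ (Fin d)) :
    MemLp (fun x => ⟪x, w⟫) 2 (mixMeasure d ε μ) := by
  have hsq : ∀ m v, Integrable (fun x : ℝ => x ^ 2) (gaussianReal m v) := fun m v =>
    (memLp_id_gaussianReal 2).integrable_sq
  have h : Integrable (fun x : ℝ => x ^ 2) ((mixMeasure d ε μ).map fun x => ⟪x, w⟫) := by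
    rw [mixMeasure_map_inner d ε hε]
    exact ((hsq _ _).smul_measure ENNReal.ofReal_ne_top).add_measure
      ((hsq _ _).smul_measure ENNReal.ofReal_ne_top)
  rw [memLp_two_iff_integrable_sq (by fun_prop)]
  exact h.comp_measurable (by fun_prop)

lemma integral_comp_inner_mixMeasure (hε : ε ∈ Set.Ioo (0 : ℝ) 1) (μ w : EuclideanSpace ℝ (Fin d))
    (f : ℝ → ℝ) (hf : Measurable f) (hi : ∀ m v, Integrable f (gaussianReal m v)) :
    ∫ x, f ⟪x, w⟫ ∂(mixMeasure d ε μ) =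
      (1 - ε) * ∫ x, f x ∂(gaussianReal 0 (‖w‖₊ ^ 2)) +
        ε * ∫ x, f x ∂(gaussianReal ⟪μ, w⟫ (‖w‖₊ ^ 2)) := by
  rw [← integral_map (φ := fun x => ⟪x, w⟫) (by fun_prop) hf.aestronglyMeasurable,
    mixMeasure_map_inner d ε hε, integral_add_measure ((hi _ _).smul_measure ENNReal.ofReal_ne_top)
      ((hi _ _).smul_measure ENNReal.ofReal_ne_top), integral_smul_measure, integral_smul_measure,
    ENNReal.toReal_ofReal (by linarith [hε.2]), ENNReal.toReal_ofReal hε.1.le]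
  simp

lemma integral_inner_mixMeasure (hε : ε ∈ Set.Ioo (0 : ℝ) 1) (μ w : EuclideanSpace ℝ (Fin d)) :
    ∫ x, ⟪x, w⟫ ∂(mixMeasure d ε μ) = ε * ⟪μ, w⟫ := by
  have h := integral_comp_inner_mixMeasure hε μ w id measurable_id fun m v =>
    (memLp_id_gaussianReal 1).integrable le_rfl
  simpa using h

lemma variance_inner_mixMeasure_le (hε : ε ∈ Set.Ioo (0 : ℝ) 1)
    (μ w : EuclideanSpace ℝ (Fin d)) :
    Var[fun x => ⟪x, w⟫; mixMeasure d ε μ] ≤ ‖w‖ ^ 2 + ε * ⟪μ, w⟫ ^ 2 := by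
  have := isProbabilityMeasure_mixMeasure d ε hε μ
  refine (variance_le_expectation_sq (memLp_inner_mixMeasure hε μ w).aestronglyMeasurable).trans
    (le_of_eq ?_)
  have h := integral_comp_inner_mixMeasure hε μ w (fun x => x ^ 2) (by fun_prop) fun m v =>
    (memLp_id_gaussianReal 2).integrable_sq
  simp only [Pi.pow_apply]
  rw [h, integral_sq_gaussianReal, integral_sq_gaussianReal]
  simp
  ring

lemma inner_avg {n : ℕ} (A : Fin n → EuclideanSpace ℝ (Fin d)) (w : EuclideanSpace ℝ (Fin d)) :
    ⟪avg A, w⟫ = (n : ℝ)⁻¹ * ∑ i, ⟪A i, w⟫ := by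
  simp [avg, real_inner_smul_left, sum_inner]

lemma pi_mixMeasure_inner_avg_le {n : ℕ} (hn : 0 < n) (hε : ε ∈ Set.Ioo (0 : ℝ) 1)
    (μ : EuclideanSpace ℝ (Fin d)) (hμ : μ ≠ 0) :
    (Measure.pi fun _ : Fin n => mixMeasure d ε μ).real {A | ⟪avg A, μ⟫ ≤ ε * ‖μ‖ ^ 2 / 2} ≤
      4 / (n * (ε * ‖μ‖) ^ 2) + 4 / (n * ε) := by
  have := isProbabilityMeasure_mixMeasure d ε hε μ
  have hX := memLp_inner_mixMeasure hε μ μ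
  have hμ' : 0 < ‖μ‖ := norm_pos_iff.2 hμ
  have hε0 := hε.1
  have hc : 0 < ε * ‖μ‖ ^ 2 / 2 := by positivity
  have h := meas_ge_le_variance_div_sq (memLp_pi_mean n hX) hc
  rw [integral_pi_mean n hX hn, integral_inner_mixMeasure hε, variance_pi_mean n hX hn] at h
  have hn' : (0 : ℝ) < n := by exact_mod_cast hn
  have hv := variance_inner_mixMeasure_le hε μ μ
  rw [real_inner_self_eq_norm_sq] at hv h
  calc _ ≤ ((Measure.pi fun _ : Fin n => mixMeasure d ε μ) _).toReal := by
        refine measureReal_mono (h₂ := measure_ne_top _ _) ?_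
        intro A hA
        have hA' : ⟪avg A, μ⟫ ≤ ε * ‖μ‖ ^ 2 / 2 := hA
        rw [inner_avg] at hA'
        change ε * ‖μ‖ ^ 2 / 2 ≤ |(n : ℝ)⁻¹ * ∑ i, ⟪A i, μ⟫ - ε * ‖μ‖ ^ 2|
        rw [le_abs]
        right
        linarith
    _ ≤ _ := ENNReal.toReal_le_of_le_ofReal
        (div_nonneg (div_nonneg (variance_nonneg _ _) hn'.le) (sq_nonneg _)) h
    _ ≤ (‖μ‖ ^ 2 + ε * (‖μ‖ ^ 2) ^ 2) / n / (ε * ‖μ‖ ^ 2 / 2) ^ 2 := by gcongr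
    _ = _ := by field_simp; norm_num

lemma integral_norm_sq_avg_le {n : ℕ} (hn : 0 < n) (hε : ε ∈ Set.Ioo (0 : ℝ) 1)
    (μ : EuclideanSpace ℝ (Fin d)) :
    Integrable (fun A => ‖avg A‖ ^ 2) (Measure.pi fun _ : Fin n => mixMeasure d ε μ) ∧
    ∫ A, ‖avg A‖ ^ 2 ∂(Measure.pi fun _ : Fin n => mixMeasure d ε μ) ≤
      (ε * ‖μ‖) ^ 2 + (d + ε * ‖μ‖ ^ 2) / n := by
  have := isProbabilityMeasure_mixMeasure d ε hε μ
  have hnorm : ∀ v : EuclideanSpace ℝ (Fin d),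
      ‖v‖ ^ 2 = ∑ j, ⟪v, EuclideanSpace.single j (1 : ℝ)⟫ ^ 2 := fun v => by
    simp [EuclideanSpace.real_norm_sq_eq, EuclideanSpace.inner_single_right]
  have hX := fun j => memLp_inner_mixMeasure hε μ (EuclideanSpace.single j (1 : ℝ))
  have hm := fun j => memLp_pi_mean n (hX j)
  have hmi := fun j => (hm j).integrable_sq
  have hn' : (0 : ℝ) < n := by exact_mod_cast hn
  simp only [hnorm (avg _), inner_avg]
  refine ⟨integrable_finsetSum _ fun j _ => hmi j, ?_⟩
  rw [integral_finsetSum _ fun j _ => hmi j]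
  have hbound : ∀ j, ∫ A, ((n : ℝ)⁻¹ * ∑ i, ⟪A i, EuclideanSpace.single j (1 : ℝ)⟫) ^ 2
      ∂(Measure.pi fun _ : Fin n => mixMeasure d ε μ) ≤
      ε ^ 2 * ⟪μ, EuclideanSpace.single j (1 : ℝ)⟫ ^ 2 +
        (1 + ε * ⟪μ, EuclideanSpace.single j (1 : ℝ)⟫ ^ 2) / n := by
    intro j
    have h := variance_eq_sub (hm j)
    rw [variance_pi_mean n (hX j) hn, integral_pi_mean n (hX j) hn,
      integral_inner_mixMeasure hε] at h
    have hv := variance_inner_mixMeasure_le hε μ (EuclideanSpace.single j (1 : ℝ))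
    have hv' := div_le_div_of_nonneg_right hv hn'.le
    simp only [Pi.pow_apply] at h
    have h1 : ‖EuclideanSpace.single j (1 : ℝ)‖ = 1 := by simp
    rw [h1, one_pow] at hv'
    linarith [mul_pow ε ⟪μ, EuclideanSpace.single j (1 : ℝ)⟫ 2]
  refine (Finset.sum_le_sum fun j _ => hbound j).trans (le_of_eq ?_)
  rw [Finset.sum_add_distrib, ← Finset.mul_sum, ← Finset.sum_div, Finset.sum_add_distrib,
    ← Finset.mul_sum, ← hnorm]
  simp
  ring

lemma pi_mixMeasure_norm_sq_avg_ge_le {n : ℕ} (hn : 0 < n) (hε : ε ∈ Set.Ioo (0 : ℝ) 1)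
    (μ : EuclideanSpace ℝ (Fin d)) {c : ℝ} (hc : 0 < c) :
    (Measure.pi fun _ : Fin n => mixMeasure d ε μ).real {A | c ≤ ‖avg A‖ ^ 2} ≤
      ((ε * ‖μ‖) ^ 2 + (d + ε * ‖μ‖ ^ 2) / n) / c := by
  obtain ⟨hi, hle⟩ := integral_norm_sq_avg_le hn hε μ
  have h := mul_meas_ge_le_integral_of_nonneg (ae_of_all _ fun A => sq_nonneg ‖avg A‖) hi c
  rw [le_div_iff₀' hc]
  exact h.trans hle

/-- Mass gained above the level `t` by the projection of a mixture on a unit vector. -/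
lemma mixMeasure_real_lt_inner_ge (hε : ε ∈ Set.Ioo (0 : ℝ) 1) {μ v : EuclideanSpace ℝ (Fin d)}
    (hv : ‖v‖ = 1) (hμv : 0 ≤ ⟪μ, v⟫) {R t : ℝ} (ht : t ≤ R) (htR : -R ≤ t - ⟪μ, v⟫) :
    (gaussianReal 0 1).real (Set.Ioi t) + ε * ⟪μ, v⟫ * gaussianPDFReal 0 1 R ≤
      (mixMeasure d ε μ).real {y | t < ⟪y, v⟫} := by
  set m := ⟪μ, v⟫ with hm
  have h1 : (gaussianReal m 1).real (Set.Ioi t) = (gaussianReal 0 1).real (Set.Ioi (t - m)) := by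
    have h := gaussianReal_map_add_const (μ := 0) (v := 1) m
    rw [zero_add] at h
    rw [← h, map_measureReal_apply (by fun_prop) measurableSet_Ioi]
    congr 1
    ext x
    simp [sub_lt_iff_lt_add]
  have h2 : (gaussianReal 0 1).real (Set.Ioi t) + m * gaussianPDFReal 0 1 R ≤
      (gaussianReal 0 1).real (Set.Ioi (t - m)) := by
    have hIoc : m * gaussianPDFReal 0 1 R ≤ (gaussianReal 0 1).real (Set.Ioc (t - m) t) := by
      rw [measureReal_def, gaussianReal_apply_eq_integral 0 one_ne_zero,
        ENNReal.toReal_ofReal (integral_nonneg fun x => gaussianPDFReal_nonneg _ _ _)]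
      have hc : ∫ _ in Set.Ioc (t - m) t, gaussianPDFReal 0 1 R = m * gaussianPDFReal 0 1 R := by
        simp [hμv]
      rw [← hc]
      refine setIntegral_mono_on (by simp) (integrable_gaussianPDFReal _ _).integrableOn
        measurableSet_Ioc fun x hx => ?_
      have hsq : (x - 0) ^ 2 ≤ (R - 0) ^ 2 :=
        sq_le_sq' (by linarith [hx.1]) (by linarith [hx.2])
      simp only [gaussianPDFReal]
      exact mul_le_mul_of_nonneg_left
        (exp_le_exp.2 (div_le_div_of_nonneg_right (neg_le_neg hsq) (by positivity)))
        (by positivity)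
    have hU : Set.Ioi (t - m) = Set.Ioc (t - m) t ∪ Set.Ioi t :=
      (Set.Ioc_union_Ioi_eq_Ioi (by linarith)).symm
    rw [hU, measureReal_union (Set.Ioc_disjoint_Ioi le_rfl) measurableSet_Ioi]
    linarith
  have h3 : (mixMeasure d ε μ).real {y | t < ⟪y, v⟫} =
      (1 - ε) * (gaussianReal 0 1).real (Set.Ioi t) + ε * (gaussianReal m 1).real (Set.Ioi t) := by
    have hone : ‖v‖₊ ^ 2 = 1 := by ext; simp [hv]
    have h := mixMeasure_map_inner d ε hε μ v
    rw [hone] at h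
    have h' : (mixMeasure d ε μ).real {y | t < ⟪y, v⟫} =
        ((mixMeasure d ε μ).map fun x => ⟪x, v⟫).real (Set.Ioi t) := by
      rw [map_measureReal_apply (by fun_prop) measurableSet_Ioi]; rfl
    have hfin1 := (gaussianReal 0 1).smul_finite (c := ENNReal.ofReal (1 - ε)) ENNReal.ofReal_ne_top
    have hfin2 := (gaussianReal m 1).smul_finite (c := ENNReal.ofReal ε) ENNReal.ofReal_ne_top
    rw [h', h, measureReal_add_apply (measure_ne_top _ _) (measure_ne_top _ _),
      measureReal_ennreal_smul_apply, measureReal_ennreal_smul_apply,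
      ENNReal.toReal_ofReal (by linarith [hε.2]),
      ENNReal.toReal_ofReal hε.1.le]
  rw [h3, h1]
  nlinarith [mul_le_mul_of_nonneg_left h2 hε.1.le]

end Mixture

lemma exists_mem_Kset_lt {n : ℕ} (hn : 2 ≤ n) : ∃ k ∈ Kset n, n < 4 * k ∧ 2 * k ≤ n := by
  refine ⟨2 ^ Nat.log 2 (n / 2), Finset.mem_image.2 ⟨_, Finset.self_mem_range_succ _, rfl⟩, ?_, ?_⟩
  · have h := Nat.lt_pow_succ_log_self (b := 2) (by norm_num) (n / 2)
    rw [pow_succ] at h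
    omega
  · have h := Nat.pow_log_le_self 2 (x := n / 2) (by omega)
    omega

lemma one_le_log_log {x : ℝ} (hx : 16 ≤ x) : 1 ≤ log (log x) := by
  have h16 : log 16 = 4 * log 2 := by
    rw [show (16 : ℝ) = 2 ^ 4 by norm_num, log_pow]; norm_num
  have h := log_le_log (by norm_num) hx
  have hlog : exp 1 ≤ log x := by linarith [log_two_gt_d9, exp_one_lt_d9]
  rwa [le_log_iff_exp_le ((exp_pos 1).trans_le hlog)]

lemma card_Kset_le_two_mul_log {n : ℕ} (hn : 2 ≤ n) : ((Kset n).card : ℝ) ≤ 2 * log n := by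
  have h : 2 ^ (Kset n).card ≤ n := by
    have h := Nat.pow_log_le_self 2 (x := n / 2) (by omega)
    rw [card_Kset, pow_succ]
    omega
  have h' : ((Kset n).card : ℝ) * log 2 ≤ log n := by
    rw [← log_pow]
    exact log_le_log (by positivity) (by exact_mod_cast h)
  nlinarith [log_two_gt_d9, (Nat.cast_nonneg (Kset n).card : (0 : ℝ) ≤ _)]

section Power

variable {d n k : ℕ} {α ε s t : ℝ}

lemma quant_alphaCorr_le (hn : 2 ≤ n) (hα : α ∈ Set.Ioo (0 : ℝ) 1) (hk : 1 ≤ k) (hkn : k ≤ n)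
    (hs : 0 ≤ s) (ht : n * ((gaussianReal 0 1).real (Set.Ioi t) + s) ≤ k)
    (hexp : exp (-2 * n * s ^ 2) ≤ α / (Kset n).card) :
    quant n (alphaCorr n α) k ≤ t := by
  classical
  have hle := hexp.trans (div_card_Kset_le_alphaCorr hn hα)
  refine quant_le hk hkn ((exp_pos _).le.trans hle) ((alphaCorr_le hn hα).trans_lt hα.2) ?_
  refine le_trans ?_ ((pi_real_card_ge_le (gaussianReal 0 1) n (measurableSet_Ioi (a := t)) hs
    (by omega)).trans hle)
  refine measureReal_mono fun z hz => ?_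
  have hz' := (lt_orderStat_sub_iff z hk hkn t).1 hz
  refine ht.trans (Nat.cast_le.2 (hz'.trans (le_of_eq ?_)))
  congr

/-- Conditionally on the direction `v`, few projections fall above a level whose upper tail
mass under the mixture exceeds `k / n`. -/
lemma pi_mixMeasure_orderStat_le (hn : 0 < n) (hε : ε ∈ Set.Ioo (0 : ℝ) 1)
    (μ v : EuclideanSpace ℝ (Fin d)) (hk : 1 ≤ k) (hkn : k ≤ n) (hs : 0 ≤ s)
    (ht : k + n * s ≤ n * (mixMeasure d ε μ).real {y | t < ⟪y, v⟫}) :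
    (Measure.pi fun _ : Fin n => mixMeasure d ε μ).real
        {Y | orderStat (fun i => ⟪Y i, v⟫) (n - k + 1) ≤ t} ≤ exp (-2 * n * s ^ 2) := by
  classical
  have := isProbabilityMeasure_mixMeasure d ε hε μ
  have hB : MeasurableSet {y : EuclideanSpace ℝ (Fin d) | t < ⟪y, v⟫} :=
    measurableSet_lt measurable_const (by fun_prop)
  refine le_trans ?_ (pi_real_card_ge_le (mixMeasure d ε μ) n hB.compl hs hn)
  refine measureReal_mono fun Y hY => ?_
  have hY' := mt (lt_orderStat_sub_iff (fun i => ⟪Y i, v⟫) hk hkn t).2 (not_lt.2 hY)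
  rw [not_le] at hY'
  have hcard := Finset.card_filter_add_card_filter_not (s := (Finset.univ : Finset (Fin n)))
    (fun i => t < ⟪Y i, v⟫)
  rw [Finset.card_univ, Fintype.card_fin] at hcard
  have hc : (n : ℝ) ≤ k + (Finset.univ.filter fun i => ¬ t < ⟪Y i, v⟫).card := by
    have : n ≤ k + (Finset.univ.filter fun i => ¬ t < ⟪Y i, v⟫).card := by
      refine hcard.symm.le.trans (Nat.add_le_add_right (le_trans (le_of_eq ?_) hY'.le) _)
      congr
    exact_mod_cast this
  have h : n * ((mixMeasure d ε μ).real {y | t < ⟪y, v⟫}ᶜ + s) ≤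
      ((Finset.univ.filter fun i => ¬ t < ⟪Y i, v⟫).card : ℝ) := by
    rw [probReal_compl_eq_one_sub hB]
    nlinarith
  refine h.trans (le_of_eq ?_)
  norm_cast
  congr

lemma two_mul_le_of_sq_signal {β c C D L N δ r x e s : ℝ} (hβ : 0 < β) (hc : 0 ≤ c)
    (hC : 1 ≤ C) (hL : 1 ≤ L) (hN : 0 < N) (hδ : 1 ≤ δ) (he : 0 ≤ e)
    (hr : C ^ 2 * δ * L ≤ N * r ^ 2) (hx : x ^ 2 ≤ 4 / β * (2 * r ^ 2 + δ ^ 2 / N))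
    (hex : r ^ 2 / 2 ≤ e * x) (hD : 256 * D ≤ c ^ 2 * β * C ^ 2) (hs : N * s ^ 2 = D * L) :
    2 * s ≤ e * c := by
  set Q := 2 * r ^ 2 + δ ^ 2 / N with hQ
  have hQ0 : 0 < Q := by positivity
  have hNQ : N * Q = 2 * (N * r ^ 2) + δ ^ 2 := by rw [hQ]; field_simp
  have hC2 : 1 ≤ C ^ 2 := one_le_pow₀ hC
  have hr1 : C ^ 2 * L ≤ N * r ^ 2 := by
    refine le_trans ?_ hr
    nlinarith [mul_le_mul_of_nonneg_left hδ (by positivity : 0 ≤ C ^ 2 * L)]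
  have hr2 : C ^ 2 * L * δ ^ 2 ≤ (N * r ^ 2) ^ 2 := by
    refine le_trans ?_ (pow_le_pow_left₀ (by positivity) hr 2)
    have h1 : 1 ≤ C ^ 2 * L := by nlinarith
    nlinarith [mul_le_mul_of_nonneg_left h1 (by positivity : 0 ≤ C ^ 2 * L * δ ^ 2)]
  have h4 : C ^ 2 * L * Q ≤ 4 * (N * (r ^ 2) ^ 2) := by
    refine le_of_mul_le_mul_left ?_ hN
    have h := mul_le_mul_of_nonneg_right hr1 (by positivity : 0 ≤ N * r ^ 2)
    calc N * (C ^ 2 * L * Q) = C ^ 2 * L * (N * Q) := by ring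
      _ = 2 * (C ^ 2 * L * (N * r ^ 2)) + C ^ 2 * L * δ ^ 2 := by rw [hNQ]; ring
      _ ≤ 4 * (N * r ^ 2) ^ 2 := by linarith [sq_nonneg (N * r ^ 2)]
      _ = _ := by ring
  have h5 : (r ^ 2) ^ 2 ≤ 16 * e ^ 2 / β * Q := by
    have h := pow_le_pow_left₀ (by positivity) hex 2
    have h' := mul_le_mul_of_nonneg_left hx (sq_nonneg e)
    calc (r ^ 2) ^ 2 = 4 * (r ^ 2 / 2) ^ 2 := by ring
      _ ≤ 4 * (e * x) ^ 2 := by linarith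
      _ = 4 * (e ^ 2 * x ^ 2) := by ring
      _ ≤ 4 * (e ^ 2 * (4 / β * Q)) := by linarith
      _ = _ := by ring
  have h6 : β * C ^ 2 * L ≤ 64 * (N * e ^ 2) := by
    have h := h4.trans (by gcongr : 4 * (N * (r ^ 2) ^ 2) ≤ 4 * (N * (16 * e ^ 2 / β * Q)))
    have h' : C ^ 2 * L * Q ≤ 64 * (N * e ^ 2) / β * Q := h.trans_eq (by ring)
    have h'' := le_of_mul_le_mul_right h' hQ0
    rw [le_div_iff₀ hβ] at h''
    linarith
  refine le_of_sq_le_sq ?_ (by positivity)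
  refine le_of_mul_le_mul_left ?_ hN
  nlinarith [mul_le_mul_of_nonneg_left h6 (sq_nonneg c),
    mul_le_mul_of_nonneg_right hD (by linarith : 0 ≤ L)]

end Power

lemma exp_neg_two_mul_le {a D L x : ℝ} (ha : 0 < a) (hL : 1 ≤ L) (hx : 0 < x)
    (hD : 1 + log (2 / a) ≤ D) (hD1 : 1 ≤ D) (hxL : x ≤ 2 * exp L) :
    exp (-2 * (D * L)) ≤ a / x := by
  rw [← le_log_iff_exp_le (by positivity), log_div ha.ne' hx.ne']
  have h := log_le_log hx hxL
  rw [log_mul two_ne_zero (exp_pos L).ne', log_exp] at h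
  rw [log_div two_ne_zero ha.ne'] at hD
  nlinarith

/-- Law of large numbers for the direction estimated on the first half of the sample. -/
lemma pi_mixMeasure_avg_bad_le {d n : ℕ} {ε β C : ℝ} (hn : 0 < n) (hε : ε ∈ Set.Ioo (0 : ℝ) 1)
    {μ : EuclideanSpace ℝ (Fin d)} (hβ : 0 < β) (hC : 1 ≤ C) (hβC : 32 ≤ β * C)
    (hr : C ^ 2 ≤ n * (ε * ‖μ‖) ^ 2) (hnε : C ≤ n * ε) :
    (Measure.pi fun _ : Fin n => mixMeasure d ε μ).real
        {A | ⟪avg A, μ⟫ ≤ ε * ‖μ‖ ^ 2 / 2 ∨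
          4 / β * (2 * (ε * ‖μ‖) ^ 2 + d / n) ≤ ‖avg A‖ ^ 2} ≤ β / 2 := by
  have hn' : (0 : ℝ) < n := by exact_mod_cast hn
  have hr0 : 0 < (ε * ‖μ‖) ^ 2 := by
    by_contra h
    have : (ε * ‖μ‖) ^ 2 = 0 := le_antisymm (not_lt.1 h) (sq_nonneg _)
    rw [this] at hr
    nlinarith
  have hμ : μ ≠ 0 := by
    rintro rfl
    simp at hr0
  have hCβ : 4 / C ≤ β / 8 := by
    rw [div_le_div_iff₀ (by linarith) (by norm_num)]
    linarith
  have h1 : 4 / (n * (ε * ‖μ‖) ^ 2) ≤ β / 8 := by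
    refine le_trans ?_ hCβ
    gcongr
    nlinarith
  have h2 : 4 / (n * ε) ≤ β / 8 := by
    refine le_trans ?_ hCβ
    gcongr
  have hW : 0 < 4 / β * (2 * (ε * ‖μ‖) ^ 2 + d / n) := by positivity
  have h3 : ((ε * ‖μ‖) ^ 2 + (d + ε * ‖μ‖ ^ 2) / n) / (4 / β * (2 * (ε * ‖μ‖) ^ 2 + d / n)) ≤
      β / 4 := by
    rw [div_le_iff₀ hW]
    have h : ε * ‖μ‖ ^ 2 / n ≤ (ε * ‖μ‖) ^ 2 := by
      rw [div_le_iff₀ hn']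
      have := mul_le_mul_of_nonneg_left (hC.trans hnε)
        (mul_nonneg hε.1.le (sq_nonneg ‖μ‖))
      nlinarith
    calc (ε * ‖μ‖) ^ 2 + (d + ε * ‖μ‖ ^ 2) / n
        = (ε * ‖μ‖) ^ 2 + (d / n + ε * ‖μ‖ ^ 2 / n) := by rw [add_div]
      _ ≤ 2 * (ε * ‖μ‖) ^ 2 + d / n := by linarith
      _ = _ := by field_simp
  have hA := pi_mixMeasure_inner_avg_le hn hε μ hμ
  have hB := pi_mixMeasure_norm_sq_avg_ge_le hn hε μ hW
  have hU := measureReal_union_le (μ := Measure.pi fun _ : Fin n => mixMeasure d ε μ)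
    {A | ⟪avg A, μ⟫ ≤ ε * ‖μ‖ ^ 2 / 2}
    {A | 4 / β * (2 * (ε * ‖μ‖) ^ 2 + d / n) ≤ ‖avg A‖ ^ 2}
  rw [← Set.ofPred_or] at hU
  linarith

/-- A bound for the measure of a set in a product from a bound on its sections. -/
lemma prod_le_add_of_forall_section_le {X Y : Type*} [MeasurableSpace X] [MeasurableSpace Y]
    {P : Measure X} {Q : Measure Y} [IsProbabilityMeasure P] [IsProbabilityMeasure Q] {S : Set (X × Y)}
    {B : Set X} (hS : MeasurableSet S) (hB : MeasurableSet B)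
    {b : ENNReal} (h : ∀ x ∉ B, Q (Prod.mk x ⁻¹' S) ≤ b) : P.prod Q S ≤ P B + b := by
  rw [Measure.prod_apply hS]
  calc ∫⁻ x, Q (Prod.mk x ⁻¹' S) ∂P ≤ ∫⁻ x, B.indicator 1 x + b ∂P := by
        refine lintegral_mono fun x => ?_
        by_cases hx : x ∈ B
        · simpa [hx] using prob_le_one.trans (le_add_right le_rfl)
        · simpa [hx] using h x hx
    _ = P B + b := by
        rw [lintegral_add_left (measurable_one.indicator hB), lintegral_indicator_one hB]
        simp

lemma normalize_of_inner_pos {E : Type*} [NormedAddCommGroup E] [InnerProductSpace ℝ E] {a μ : E}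
    (h : 0 < ⟪a, μ⟫) : ‖‖a‖⁻¹ • a‖ = 1 ∧ 0 ≤ ⟪μ, ‖a‖⁻¹ • a⟫ ∧ ⟪μ, ‖a‖⁻¹ • a⟫ * ‖a‖ = ⟪a, μ⟫ := by
  have ha : 0 < ‖a‖ := by
    rw [norm_pos_iff]
    rintro rfl
    simp at h
  have hi : ⟪μ, ‖a‖⁻¹ • a⟫ * ‖a‖ = ⟪a, μ⟫ := by
    rw [inner_smul_right, real_inner_comm]
    field_simp
  refine ⟨?_, nonneg_of_mul_nonneg_left (hi ▸ h.le) ha, hi⟩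
  rw [norm_smul, norm_inv, norm_norm, inv_mul_cancel₀ ha.ne']

set_option maxHeartbeats 1000000 in
/-- Power of the test, for an explicit choice of the constant `C`. -/
lemma splitLaw_mixMeasure_compl_rejRegion2_le {α β M T c C D : ℝ}
    (hα : α ∈ Set.Ioo (0 : ℝ) 1) (hβ : β ∈ Set.Ioo (0 : ℝ) 1)
    (hT : (gaussianReal 0 1).real (Set.Ioi T) < 1 / 8)
    (hT' : 1 / 2 < (gaussianReal 0 1).real (Set.Ioi (-T)))
    (hc : c = gaussianPDFReal 0 1 (T + M)) (hD : D = 1 + log (2 / α) + log (2 / β))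
    (hC : 16 ≤ C) (hβC : 32 ≤ β * C) (hDC : 256 * D ≤ c ^ 2 * β * C ^ 2)
    (hMC : 64 * D * M ^ 2 ≤ C ^ 2) {d n : ℕ} (hd : 1 ≤ d) (hn : 2 ≤ n)
    {ε : ℝ} {μ : EuclideanSpace ℝ (Fin d)} (hε : ε ∈ Set.Ioo (0 : ℝ) 1) (hμ : ‖μ‖ ≤ M)
    (hr : C * (d : ℝ) ^ ((1 : ℝ) / 4) * √(log (log n)) / √n ≤ ε * ‖μ‖) (hnε : C ≤ n * ε) :
    splitLaw n (mixMeasure d ε μ) (rejRegion2 d n α)ᶜ ≤ ENNReal.ofReal β := by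
  have := isProbabilityMeasure_mixMeasure d ε hε μ
  have hn0 : (0 : ℝ) < n := by positivity
  have hn16 : (16 : ℝ) ≤ n := by nlinarith [hε.2]
  set L := log (log n) with hLdef
  have hL : 1 ≤ L := one_le_log_log hn16
  have hlogα : 0 < log (2 / α) := log_pos (by rw [lt_div_iff₀ hα.1]; linarith [hα.2])
  have hlogβ : 0 < log (2 / β) := log_pos (by rw [lt_div_iff₀ hβ.1]; linarith [hβ.2])
  have hD1 : 1 ≤ D := by linarith
  set r := ε * ‖μ‖ with hrdef
  have hr0 : 0 ≤ r := mul_nonneg hε.1.le (norm_nonneg _)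
  have hrM : r ≤ M := (mul_le_of_le_one_left (norm_nonneg _) hε.2.le).trans hμ
  have hd1 : (1 : ℝ) ≤ d := by exact_mod_cast hd
  set δ := ((d : ℝ) ^ ((1 : ℝ) / 4)) ^ 2 with hδdef
  have hδ1 : 1 ≤ δ := one_le_pow₀ (one_le_rpow hd1 (by norm_num))
  have hδd : δ ^ 2 = d := by
    rw [hδdef, ← pow_mul, ← rpow_natCast, ← rpow_mul (by linarith)]
    norm_num
  have hrn : C ^ 2 * δ * L ≤ n * r ^ 2 := by
    have h := pow_le_pow_left₀ (by positivity) hr 2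
    rw [div_pow, mul_pow, mul_pow, sq_sqrt (by linarith), sq_sqrt hn0.le, div_le_iff₀ hn0] at h
    linarith
  have hrnL : C ^ 2 * L ≤ n * r ^ 2 := by
    refine le_trans ?_ hrn
    nlinarith [mul_le_mul_of_nonneg_left hδ1 (by positivity : 0 ≤ C ^ 2 * L)]
  set s := √(D * L / n) with hsdef
  have hs0 : 0 ≤ s := sqrt_nonneg _
  have hs : n * s ^ 2 = D * L := by
    rw [hsdef, sq_sqrt (by positivity)]
    field_simp
  have hs8 : s ≤ 1 / 8 := by
    refine le_of_sq_le_sq ?_ (by norm_num)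
    have hM2 : n * r ^ 2 ≤ n * M ^ 2 := by gcongr
    refine le_of_mul_le_mul_left (a := C ^ 2 * n) ?_ (by positivity)
    calc C ^ 2 * n * s ^ 2 = D * (C ^ 2 * L) := by rw [mul_assoc, hs]; ring
      _ ≤ D * (n * M ^ 2) := mul_le_mul_of_nonneg_left (hrnL.trans hM2) (by linarith)
      _ = n / 64 * (64 * D * M ^ 2) := by ring
      _ ≤ n / 64 * C ^ 2 := by gcongr
      _ = _ := by ring
  have hlogn : log n = exp L := by
    rw [hLdef, exp_log]
    exact log_pos (by linarith)
  have hexp : -2 * (n : ℝ) * s ^ 2 = -2 * (D * L) := by rw [mul_assoc, hs]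
  obtain ⟨k, hk, hk4, hk2⟩ := exists_mem_Kset_lt hn
  have hk1 := one_le_of_mem_Kset hk
  have hkn : k ≤ n := by omega
  have hk4' : (n : ℝ) < 4 * k := by exact_mod_cast hk4
  have hk2' : 2 * (k : ℝ) ≤ n := by exact_mod_cast hk2
  set p := k / n - s with hp
  have hp8 : 1 / 8 ≤ p := by
    have : 1 / 4 ≤ (k : ℝ) / n := by rw [le_div_iff₀ hn0]; linarith
    linarith
  have hp2 : p ≤ 1 / 2 := by
    have : (k : ℝ) / n ≤ 1 / 2 := by rw [div_le_iff₀ hn0]; linarith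
    linarith
  obtain ⟨t, ht⟩ : ∃ t, (gaussianReal 0 1).real (Set.Ioi t) = p :=
    ⟨_, measureReal_Ioi_sInf _ gaussianReal_zero_one_singleton (by linarith) (by linarith)⟩
  have htT : t ≤ T := by
    by_contra! h
    have := measureReal_mono (μ := gaussianReal 0 1) (Set.Ioi_subset_Ioi h.le)
    linarith
  have htT' : -T ≤ t := by
    by_contra! h
    have := measureReal_mono (μ := gaussianReal 0 1) (Set.Ioi_subset_Ioi h.le)
    linarith
  have hnp : n * (p + s) = k := by
    rw [hp, sub_add_cancel]
    field_simp
  have hquant : quant n (alphaCorr n α) k ≤ t := by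
    refine quant_alphaCorr_le hn hα hk1 hkn hs0 (by rw [ht, hnp]) ?_
    rw [hexp]
    refine exp_neg_two_mul_le hα.1 hL ?_ (by linarith) (by linarith) ?_
    · exact_mod_cast Finset.card_pos.2 ⟨k, hk⟩
    · rw [← hlogn]
      exact card_Kset_le_two_mul_log hn
  have hexpβ : exp (-2 * n * s ^ 2) ≤ β / 2 := by
    rw [hexp]
    refine exp_neg_two_mul_le hβ.1 hL two_pos (by linarith) (by linarith) ?_
    linarith [one_le_exp (zero_le_one.trans hL)]
  have hbad := pi_mixMeasure_avg_bad_le (by omega) hε hβ.1 (by linarith) hβC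
    (by nlinarith : C ^ 2 ≤ n * r ^ 2) hnε
  have hsum : ENNReal.ofReal β = ENNReal.ofReal (β / 2) + ENNReal.ofReal (β / 2) := by
    rw [← ENNReal.ofReal_add (by linarith [hβ.1]) (by linarith [hβ.1]), add_halves]
  have hm := measurable_avg d n
  have hbadm : MeasurableSet {A : Fin n → EuclideanSpace ℝ (Fin d) |
      ⟪avg A, μ⟫ ≤ ε * ‖μ‖ ^ 2 / 2 ∨ 4 / β * (2 * r ^ 2 + d / n) ≤ ‖avg A‖ ^ 2} := by
    rw [Set.ofPred_or]
    exact (measurableSet_le (hm.inner_const (c := μ)) measurable_const).union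
      (measurableSet_le measurable_const (hm.norm.pow_const 2))
  rw [hsum, splitLaw]
  refine (prod_le_add_of_forall_section_le (measurableSet_rejRegion2 hn α).compl hbadm
    fun A hA => ?_).trans (add_le_add_left ((ENNReal.le_ofReal_iff_toReal_le (measure_ne_top _ _)
      (by linarith [hβ.1])).2 hbad) _)
  obtain ⟨hA1, hA2⟩ := not_or.1 hA
  rw [not_le] at hA1 hA2
  obtain ⟨v, hv⟩ : ∃ v, v = ‖avg A‖⁻¹ • avg A := ⟨_, rfl⟩
  have hA0 : 0 < ⟪avg A, μ⟫ :=
    (div_nonneg (mul_nonneg hε.1.le (sq_nonneg _)) two_pos.le).trans_lt hA1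
  obtain ⟨hv1, hv0, hvA⟩ := normalize_of_inner_pos hA0
  rw [← hv] at hv1 hv0 hvA
  have hvM : ⟪μ, v⟫ ≤ M := (real_inner_le_norm _ _).trans (by rw [hv1, mul_one]; exact hμ)
  have hgain : 2 * s ≤ ε * ⟪μ, v⟫ * c := by
    refine two_mul_le_of_sq_signal (N := n) hβ.1 (hc ▸ gaussianPDFReal_nonneg _ _ _)
      (by linarith) hL hn0 hδ1 (mul_nonneg hε.1.le hv0) hrn (x := ‖avg A‖) ?_ ?_ hDC hs
    · rw [hδd]
      exact hA2.le
    · rw [mul_assoc, hvA, hrdef]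
      have := mul_le_mul_of_nonneg_left hA1.le hε.1.le
      linarith
  have hmass := mixMeasure_real_lt_inner_ge hε hv1 hv0 (R := T + M) (t := t) (by linarith)
    (by linarith)
  rw [ht, ← hc] at hmass
  rw [ENNReal.le_ofReal_iff_toReal_le (measure_ne_top _ _) (by linarith [hβ.1])]
  refine le_trans ?_ ((pi_mixMeasure_orderStat_le (by omega) hε μ v hk1 hkn hs0 (t := t)
    ?_).trans hexpβ)
  · refine measureReal_mono fun Y hY => ?_
    refine (not_lt.1 fun h => hY ?_ : _ ≤ quant n (alphaCorr n α) k).trans hquant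
    exact ⟨k, hk, hv ▸ h⟩
  · rw [← hnp, ← mul_add]
    exact mul_le_mul_of_nonneg_left (by linarith) hn0.le

end

/-- **Theorem (second testing procedure for `F₂[M]`).**
The projected order-statistics test `Ψ₂` is of level `α`, and there is a positive
constant `C(α,β,M)` depending only on `α, β, M` such that `P_f(Ψ₂ = 0) ≤ β` for every
`f_{(ε,μ)} ∈ F₂[M]` with `ε‖μ‖ ≥ C(α,β,M)·d^{1/4}·√(ln ln n)/√n` and `n·ε ≥ C(α,β,M)`. -/
theorem upperBound_orderStat_test (M α β : ℝ) (hM : 0 < M)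
    (hα : α ∈ Set.Ioo (0 : ℝ) 1) (hβ : β ∈ Set.Ioo (0 : ℝ) 1) :
    (∀ d n : ℕ, 1 ≤ d → 2 ≤ n →
      splitLaw n (gaussMeasure d) (rejRegion2 d n α) ≤ ENNReal.ofReal α) ∧
    ∃ C : ℝ, 0 < C ∧ ∀ d n : ℕ, 1 ≤ d → 2 ≤ n →
      ∀ (ε : ℝ) (μ : EuclideanSpace ℝ (Fin d)), ε ∈ Set.Ioo (0 : ℝ) 1 → ‖μ‖ ≤ M →
        C * (d : ℝ) ^ ((1 : ℝ) / 4) * Real.sqrt (Real.log (Real.log n)) / Real.sqrt n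
          ≤ ε * ‖μ‖ →
        C ≤ n * ε →
        splitLaw n (mixMeasure d ε μ) (rejRegion2 d n α)ᶜ ≤ ENNReal.ofReal β := by
  refine ⟨fun d n hd hn => splitLaw_gaussMeasure_rejRegion2_le hα hd hn, ?_⟩
  obtain ⟨T, hT, hT'⟩ := (((tendsto_measureReal_Ioi_atTop (ProbabilityTheory.gaussianReal 0 1)).eventually
    (gt_mem_nhds (by norm_num : (0 : ℝ) < 1 / 8))).and
    (((tendsto_measureReal_Ioi_atBot (ProbabilityTheory.gaussianReal 0 1)).comp Filter.tendsto_neg_atTop_atBot).eventually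
    (lt_mem_nhds (by norm_num : (1 / 2 : ℝ) < 1)))).exists
  obtain ⟨c, hc⟩ : ∃ c, c = ProbabilityTheory.gaussianPDFReal 0 1 (T + M) := ⟨_, rfl⟩
  obtain ⟨D, hD⟩ : ∃ D, D = 1 + log (2 / α) + log (2 / β) := ⟨_, rfl⟩
  have hc0 : 0 < c := hc ▸ ProbabilityTheory.gaussianPDFReal_pos _ _ _ one_ne_zero
  have hβ0 := hβ.1
  have hev : ∀ᶠ C : ℝ in Filter.atTop, 16 ≤ C ∧ 32 ≤ β * C ∧ 256 * D ≤ c ^ 2 * β * C ^ 2 ∧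
      64 * D * M ^ 2 ≤ C ^ 2 :=
    (Filter.eventually_ge_atTop 16).and (((Filter.tendsto_id.const_mul_atTop hβ0).eventually_ge_atTop 32).and
      ((((Filter.tendsto_pow_atTop two_ne_zero).const_mul_atTop
        (by positivity : 0 < c ^ 2 * β)).eventually_ge_atTop _).and
        ((Filter.tendsto_pow_atTop two_ne_zero).eventually_ge_atTop _)))
  obtain ⟨C, hC, hβC, hDC, hMC⟩ := hev.exists
  exact ⟨C, by linarith, fun d n hd hn ε μ hε hμ hr hnε =>
    splitLaw_mixMeasure_compl_rejRegion2_le hα hβ hT hT' hc hD hC hβC hDC hMC hd hn hε hμ hr hnε⟩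

end
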